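/- Fix an integer r ≥ 1 and let n_3 = 4r − 2 (which equals R_3(rK_2)). Then R̃_3(rK_2; n_3) = 5r − 4. Equivalently: (1) Builder has a strategy that, playing on K_{4r−2} with 3 colors, guarantees within 5r − 4 moves that some color class contains r pairwise disjoint edges, against every Painter strategy; and (2) Painter has a strategy such that for every way Builder adaptively selects 5r − 5 distinct edges of K_{4r−2}, after these moves no color class contains r pairwise disjoint edges. -/

import Mathlib

open Finset

/-- Two edges of a complete graph (elements of `Sym2 (Fin n)`) are disjoint if they
share no vertex. -/
def EdgeDisjoint {n : ℕ} (e f : Sym2 (Fin n)) : Prop := ∀ v, v ∈ e → v ∉ f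

/-- A finite set of elements of `Sym2 (Fin n)` is a matching if each element is a genuine
(non-loop) edge and the edges are pairwise disjoint. -/
def IsMatchingIn {n : ℕ} (M : Finset (Sym2 (Fin n))) : Prop :=
  (∀ e ∈ M, ¬ e.IsDiag) ∧ (M : Set (Sym2 (Fin n))).Pairwise EdgeDisjoint

/-- A history of the online Ramsey game on `K_n` with `t` colours: the list of
edges played so far, each together with the colour Painter gave it. -/
abbrev GameHistory (n t : ℕ) := List (Sym2 (Fin n) × Fin t)

/-- A Builder strategy: given the history so far, select the next edge. -/
abbrev BuilderStrategy (n t : ℕ) := GameHistory n t → Sym2 (Fin n)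

/-- A Painter strategy: given the history so far and the newly selected edge,
choose a colour for it. -/
abbrev PainterStrategy (n t : ℕ) := GameHistory n t → Sym2 (Fin n) → Fin t

/-- The history after `k` moves when Builder plays strategy `B` against Painter
strategy `P`. -/
def gamePlay {n t : ℕ} (B : BuilderStrategy n t) (P : PainterStrategy n t) :
    ℕ → GameHistory n t
  | 0 => []
  | k + 1 =>
      let h := gamePlay B P k
      h ++ [(B h, P h (B h))]

/-- Builder plays legally for the first `k` moves against `P`: every selected edge
is a genuine (non-loop) edge not selected before. -/
def BuilderValid {n t : ℕ} (B : BuilderStrategy n t) (P : PainterStrategy n t)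
    (k : ℕ) : Prop :=
  ∀ j < k, ¬ (B (gamePlay B P j)).IsDiag ∧
    B (gamePlay B P j) ∉ (gamePlay B P j).map Prod.fst

/-- The history `h` contains, for some colour `i`, a matching of `r i` edges all
coloured `i`. -/
def HistoryHasMatching (n t : ℕ) (r : Fin t → ℕ) (h : GameHistory n t) : Prop :=
  ∃ i : Fin t, ∃ M : Finset (Sym2 (Fin n)),
    M.card = r i ∧ IsMatchingIn M ∧ ∀ e ∈ M, (e, i) ∈ h

/-- Builder can force, within `k` legal moves on `K_n` with `t` colours, some colour
`i` to contain a matching of `r i` edges, against every Painter strategy. -/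
def BuilderWinsIn (n t : ℕ) (r : Fin t → ℕ) (k : ℕ) : Prop :=
  ∃ B : BuilderStrategy n t, (∀ P : PainterStrategy n t, BuilderValid B P k) ∧
    ∀ P : PainterStrategy n t, HistoryHasMatching n t r (gamePlay B P k)

/-- The restricted online Ramsey number `R̃(r₁K₂,…,r_tK₂; n)`: the least `k` such
that Builder can force a win within `k` moves. -/
noncomputable def restrictedOnlineRamsey (n t : ℕ) (r : Fin t → ℕ) : ℕ :=
  sInf {k | BuilderWinsIn n t r k}

/-- A colouring `c` of (the edges of) `K_N` with `t` colours contains, for some colour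
`i`, a matching of `r i` edges all coloured `i`. -/
def ColoringHasMatching (N t : ℕ) (r : Fin t → ℕ) (c : Sym2 (Fin N) → Fin t) : Prop :=
  ∃ i : Fin t, ∃ M : Finset (Sym2 (Fin N)),
    M.card = r i ∧ IsMatchingIn M ∧ ∀ e ∈ M, c e = i

/-- The classical Ramsey number `R(r₁K₂,…,r_tK₂)`: the least `N` such that every
`t`-colouring of the edges of `K_N` contains, for some `i`, a matching of `r i`
edges in colour `i`. -/
noncomputable def matchingRamsey (t : ℕ) (r : Fin t → ℕ) : ℕ :=
  sInf {N | ∀ c : Sym2 (Fin N) → Fin t, ColoringHasMatching N t r c}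

/-!
**Painter.** Painter reserves `r - 1` slots for each colour but one, the overflow colour. Each slot
of colour `c` holds either nothing, both ends of a single edge, or one vertex common to all the
edges it has absorbed; in every case its edges contribute at most one edge to a matching of
colour `c`. An edge meeting a slot is absorbed by it, an edge missing all slots opens an empty slot,
and only when there is none left does it receive the overflow colour. So a monochromatic matching
`rK₂` has the overflow colour, and its `2r` vertices avoid all the slots. A slot with `s` vertices,
`s = 1, 2`, has consumed at least `3 - s` moves, so few vertices in the slots mean many moves.

**Builder.** Builder first plays `2r - 1` disjoint edges on `4r - 2` vertices. Either some colour
occurs `r` times among them, or there are edges `e₀`, `e₁`, `e₂` of all three colours. In the latter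
case Builder plays an edge `xy` joining the ends of two of them, and, if this did not give the third
colour, an edge joining the end of the one whose colour `xy` did not repeat to the third edge. Among
the edges played there is now a set of four vertices spanning every colour. Set these vertices
aside, with one edge of each colour, and complete the matching on the remaining vertices. One such
round takes at most three moves and lowers the number of edges still required in each colour by one.
-/

section Matching

variable {n : ℕ} {e f : Sym2 (Fin n)} {M N : Finset (Sym2 (Fin n))}

theorem EdgeDisjoint.symm (h : EdgeDisjoint e f) : EdgeDisjoint f e :=
  fun v hf he => h v he hf

theorem not_edgeDisjoint_self (e : Sym2 (Fin n)) : ¬ EdgeDisjoint e e :=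
  e.ind fun x _ h => h x (Sym2.mem_mk_left ..) (Sym2.mem_mk_left ..)

theorem disjoint_of_edgeDisjoint (h : ∀ e ∈ M, ∀ f ∈ N, EdgeDisjoint e f) : Disjoint M N :=
  Finset.disjoint_left.2 fun e hM hN => not_edgeDisjoint_self e (h e hM e hN)

theorem IsMatchingIn.mono (hN : IsMatchingIn N) (h : M ⊆ N) : IsMatchingIn M :=
  ⟨fun e he => hN.1 e (h he), hN.2.mono (Finset.coe_subset.2 h)⟩

theorem isMatchingIn_empty : IsMatchingIn (∅ : Finset (Sym2 (Fin n))) := by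
  simp [IsMatchingIn]

theorem isMatchingIn_singleton (he : ¬ e.IsDiag) : IsMatchingIn {e} := by
  simp [IsMatchingIn, he]

theorem IsMatchingIn.union (hM : IsMatchingIn M) (hN : IsMatchingIn N)
    (h : ∀ e ∈ M, ∀ f ∈ N, EdgeDisjoint e f) : IsMatchingIn (M ∪ N) := by
  refine ⟨fun e he => (Finset.mem_union.1 he).elim (hM.1 e) (hN.1 e), ?_⟩
  rw [Finset.coe_union, Set.pairwise_union]
  exact ⟨hM.2, hN.2, fun e he f hf _ => ⟨h e he f hf, (h e he f hf).symm⟩⟩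

theorem IsMatchingIn.card_biUnion_toFinset (hM : IsMatchingIn M) :
    #(M.biUnion Sym2.toFinset) = 2 * #M := by
  rw [Finset.card_biUnion,
    Finset.sum_congr rfl fun e he => Sym2.card_toFinset_of_not_isDiag e (hM.1 e he)]
  · simp [mul_comm]
  · refine fun e he f hf hef => Finset.disjoint_left.2 fun v hve hvf => ?_
    exact hM.2 he hf hef v (Sym2.mem_toFinset.1 hve) (Sym2.mem_toFinset.1 hvf)

end Matching

theorem exists_lt_card_fiber_or_forall_exists_mem {α β : Type*} [Fintype β] [DecidableEq β]
    {s : Finset α} (f : α → β) {m : ℕ} (hs : (Fintype.card β - 1) * m < #s) :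
    (∃ b, m < #{a ∈ s | f a = b}) ∨ ∀ b, ∃ a ∈ s, f a = b := by
  refine or_iff_not_imp_right.2 fun h => ?_
  push Not at h
  obtain ⟨b, hb⟩ := h
  obtain ⟨c, -, hc⟩ := Finset.exists_lt_card_fiber_of_mul_lt_card_of_maps_to
    (t := univ.erase b) (fun a ha => Finset.mem_erase.2 ⟨hb a ha, Finset.mem_univ _⟩)
    (by rwa [Finset.card_erase_of_mem (Finset.mem_univ b), Finset.card_univ])
  exact ⟨c, hc⟩

section Game

variable {n t : ℕ} {r : Fin t → ℕ} {h h' : GameHistory n t} {e : Sym2 (Fin n)}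

theorem length_gamePlay (B : BuilderStrategy n t) (P : PainterStrategy n t) (k : ℕ) :
    (gamePlay B P k).length = k := by
  induction k with
  | zero => rfl
  | succ k ih => simp [gamePlay, ih]

theorem HistoryHasMatching.mono (H : HistoryHasMatching n t r h) (hh : h ⊆ h') :
    HistoryHasMatching n t r h' :=
  let ⟨i, M, hcard, hM, hcol⟩ := H
  ⟨i, M, hcard, hM, fun e he => hh (hcol e he)⟩

/-- Selecting `e` is a legal move of Builder after the history `h`; this is the condition that
`BuilderValid` imposes on every move. -/
def IsLegal (h : GameHistory n t) (e : Sym2 (Fin n)) : Prop :=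
  ¬ e.IsDiag ∧ e ∉ h.map Prod.fst

theorem exists_isLegal (hlen : h.length < n.choose 2) : ∃ e, IsLegal h e := by
  have hedges : #{e : Sym2 (Fin n) | ¬ e.IsDiag} = n.choose 2 := by
    rw [← Fintype.card_subtype, Sym2.card_subtype_not_diag, Fintype.card_fin]
  have hplayed : #(h.map Prod.fst).toFinset ≤ h.length := by
    simpa using List.toFinset_card_le (h.map Prod.fst)
  obtain ⟨e, he, hnew⟩ := Finset.exists_mem_notMem_of_card_lt_card
    (hplayed.trans_lt (hlen.trans_eq hedges.symm))
  exact ⟨e, (Finset.mem_filter.1 he).2, mt List.mem_toFinset.2 hnew⟩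

end Game

/-! ### Painter's strategy -/

/-- The least number of moves after which a slot of Painter can hold `s ≤ 2` vertices: an edge
opens it with two vertices, and a second edge may reduce it to one. -/
def slotCost (s : ℕ) : ℕ := if s = 0 then 0 else 3 - s

/-- Painter's invariant: `X i` is the set of vertices held by the slot `i`, which absorbs edges of
colour `colour i`, and `z` is the overflow colour. -/
structure PainterInv {n t : ℕ} {σ : Type*} [Fintype σ] (z : Fin t) (colour : σ → Fin t)
    (h : GameHistory n t) (X : σ → Finset (Fin n)) : Prop where
  disjoint : Pairwise fun i j => Disjoint (X i) (X j)
  card_le : ∀ i, #(X i) ≤ 2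
  absorbed : ∀ e c, (e, c) ∈ h → c ≠ z → ∃ i, colour i = c ∧ (X i).Nonempty ∧ ∀ v ∈ X i, v ∈ e
  overflow : ∀ e, (e, z) ∈ h → ∀ i, (X i).Nonempty ∧ ∀ v ∈ X i, v ∉ e
  cost : ∑ i, slotCost #(X i) + h.countP (·.2 = z) ≤ h.length

namespace PainterInv

variable {n t : ℕ} {σ : Type*} [Fintype σ] {z : Fin t} {colour : σ → Fin t}
  {h : GameHistory n t} {X : σ → Finset (Fin n)} {e : Sym2 (Fin n)}

theorem nil : PainterInv z colour ([] : GameHistory n t) fun _ => ∅ := by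
  constructor <;> simp [slotCost, Pairwise]

theorem update [DecidableEq σ] (H : PainterInv z colour h X) {i : σ} (hi : colour i ≠ z)
    {Y : Finset (Fin n)} (hY : Y.Nonempty) (hYcard : #Y ≤ 2) (hYe : ∀ v ∈ Y, v ∈ e)
    (hYX : (X i).Nonempty → Y ⊆ X i) (hdisj : ∀ j, j ≠ i → Disjoint Y (X j))
    (hcost : slotCost #Y ≤ slotCost #(X i) + 1) :
    PainterInv z colour (h ++ [(e, colour i)]) (Function.update X i Y) where
  disjoint j k hjk := by
    rcases eq_or_ne j i with rfl | hj
    · simpa [Function.update_of_ne hjk.symm] using hdisj k hjk.symm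
    rcases eq_or_ne k i with rfl | hk
    · simpa [Function.update_of_ne hj] using (hdisj j hj).symm
    simpa [Function.update_of_ne hj, Function.update_of_ne hk] using H.disjoint hjk
  card_le j := by
    rcases eq_or_ne j i with rfl | hj
    · simpa using hYcard
    · simpa [Function.update_of_ne hj] using H.card_le j
  absorbed f c hf hc := by
    rcases List.mem_append.1 hf with hf | hf
    · obtain ⟨j, hjc, hj, hjf⟩ := H.absorbed f c hf hc
      refine ⟨j, hjc, ?_⟩
      rcases eq_or_ne j i with rfl | hji
      · simpa using ⟨hY, fun v hv => hjf v (hYX hj hv)⟩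
      · simpa [Function.update_of_ne hji] using ⟨hj, hjf⟩
    · obtain ⟨rfl, rfl⟩ : f = e ∧ c = colour i := by simpa using hf
      exact ⟨i, rfl, by simpa using ⟨hY, hYe⟩⟩
  overflow f hf j := by
    have ⟨hj, hjf⟩ := H.overflow f (by simpa [hi.symm] using hf) j
    rcases eq_or_ne j i with rfl | hji
    · simpa using ⟨hY, fun v hv => hjf v (hYX hj hv)⟩
    · simpa [Function.update_of_ne hji] using ⟨hj, hjf⟩
  cost := by
    have hsum : ∑ j, slotCost #(Function.update X i Y j) ≤ ∑ j, slotCost #(X j) + 1 := by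
      rw [← Finset.add_sum_erase _ _ (Finset.mem_univ i),
        ← Finset.add_sum_erase univ (fun j => slotCost #(X j)) (Finset.mem_univ i),
        Finset.sum_congr rfl fun j hj => by
          rw [Function.update_of_ne (Finset.ne_of_mem_erase hj)], Function.update_self]
      lia
    have hcount : (h ++ [(e, colour i)]).countP (·.2 = z) = h.countP (·.2 = z) := by
      simp [hi]
    have := H.cost
    simp only [hcount, List.length_append, List.length_singleton]
    lia

theorem append_overflow (H : PainterInv z colour h X) (hX : ∀ i, (X i).Nonempty)
    (he : ∀ i, ∀ v ∈ X i, v ∉ e) : PainterInv z colour (h ++ [(e, z)]) X where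
  disjoint := H.disjoint
  card_le := H.card_le
  absorbed f c hf hc := H.absorbed f c (by simpa [hc] using hf) hc
  overflow f hf i := by
    rcases List.mem_append.1 hf with hf | hf
    · exact H.overflow f hf i
    · obtain rfl : f = e := by simpa using hf
      exact ⟨hX i, he i⟩
  cost := by simpa [← add_assoc] using H.cost

theorem exists_append (H : PainterInv z colour h X) (hz : ∀ i, colour i ≠ z) (he : ¬ e.IsDiag) :
    ∃ c X', PainterInv z colour (h ++ [(e, c)]) X' := by
  classical
  by_cases hmeet : ∃ i, ∃ v ∈ X i, v ∈ e
  · obtain ⟨i, v, hv, hve⟩ := hmeet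
    refine ⟨colour i, _, H.update (hz i) (Finset.singleton_nonempty v) (by simp) (by simpa)
      (fun _ => by simpa) (fun j hj => ?_) ?_⟩
    · exact (H.disjoint hj.symm).mono_left (by simpa)
    · have := H.card_le i
      have := Finset.card_pos.2 ⟨v, hv⟩
      simp only [slotCost, Finset.card_singleton]
      split_ifs <;> lia
  push Not at hmeet
  by_cases hfull : ∀ i, (X i).Nonempty
  · exact ⟨z, X, H.append_overflow hfull hmeet⟩
  push Not at hfull
  obtain ⟨i, hi⟩ := hfull
  have hcard : #e.toFinset = 2 := Sym2.card_toFinset_of_not_isDiag e he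
  refine ⟨colour i, _, H.update (hz i) (Y := e.toFinset) (Finset.card_pos.1 (by lia)) hcard.le
    (fun v => Sym2.mem_toFinset.1) (by simp [hi]) (fun j _ => ?_) (by simp [hcard, slotCost])⟩
  exact Finset.disjoint_right.2 fun v hv => mt Sym2.mem_toFinset.1 (hmeet j v hv)

theorem card_le_card_slots (H : PainterInv z colour h X) {c : Fin t} (hc : c ≠ z)
    {M : Finset (Sym2 (Fin n))} (hM : IsMatchingIn M) (hcol : ∀ e ∈ M, (e, c) ∈ h) :
    #M ≤ #{i | colour i = c} := by
  choose slot hslot hne hsub using fun e : M => H.absorbed e c (hcol e e.2) hc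
  rw [← Fintype.card_coe M]
  refine Finset.card_le_card_of_injOn slot (fun e _ => by simpa using hslot e) ?_
  intro e _ f _ hef
  by_contra hne'
  obtain ⟨v, hv⟩ := hne e
  exact hM.2 e.2 f.2 (Subtype.coe_ne_coe.2 hne') v (hsub e v hv) (hsub f v (hef ▸ hv))

theorem two_mul_card_add_sum_card_le (H : PainterInv z colour h X)
    {M : Finset (Sym2 (Fin n))} (hM : IsMatchingIn M) (hcol : ∀ e ∈ M, (e, z) ∈ h) :
    2 * #M + ∑ i, #(X i) ≤ n := by
  have hdisj : Disjoint (M.biUnion Sym2.toFinset) (univ.biUnion X) := by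
    simp only [Finset.disjoint_left, Finset.mem_biUnion, Sym2.mem_toFinset]
    rintro v ⟨e, he, hve⟩ ⟨i, -, hvi⟩
    exact (H.overflow e (hcol e he) i).2 v hvi hve
  rw [← hM.card_biUnion_toFinset, ← Finset.card_biUnion fun i _ j _ hij => H.disjoint hij,
    ← Finset.card_union_of_disjoint hdisj]
  exact card_finset_fin_le _

theorem card_le_countP {M : Finset (Sym2 (Fin n))} (hcol : ∀ e ∈ M, (e, z) ∈ h) :
    #M ≤ h.countP (·.2 = z) := by
  rw [← Finset.card_image_of_injective M (Prod.mk_left_injective z), List.countP_eq_length_filter]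
  refine (Finset.card_le_card fun p hp => ?_).trans (List.toFinset_card_le _)
  obtain ⟨e, he, rfl⟩ := Finset.mem_image.1 hp
  simpa using hcol e he

theorem three_mul_card_le (H : PainterInv z colour h X) {M : Finset (Sym2 (Fin n))}
    (hM : IsMatchingIn M) (hcol : ∀ e ∈ M, (e, z) ∈ h) (hpos : 0 < #M) :
    3 * (Fintype.card σ + #M) ≤ h.length + n := by
  obtain ⟨e, he⟩ := Finset.card_pos.1 hpos
  have hslots : ∑ i, (slotCost #(X i) + #(X i)) = 3 * Fintype.card σ := by
    rw [Finset.sum_congr rfl fun i _ => ?_, Finset.sum_const, Finset.card_univ, smul_eq_mul,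
      mul_comm]
    have := H.card_le i
    have := Finset.card_pos.2 (H.overflow e (hcol e he) i).1
    simp only [slotCost]
    split_ifs <;> lia
  rw [Finset.sum_add_distrib] at hslots
  have := H.cost
  have := card_le_countP hcol
  have := H.two_mul_card_add_sum_card_le hM hcol
  lia

end PainterInv

theorem exists_painterStrategy {n t : ℕ} {σ : Type*} [Fintype σ] {z : Fin t} {colour : σ → Fin t}
    (hz : ∀ i, colour i ≠ z) :
    ∃ P : PainterStrategy n t, ∀ (B : BuilderStrategy n t) (k : ℕ), BuilderValid B P k →
      ∃ X, PainterInv z colour (gamePlay B P k) X := by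
  have : Nonempty (Fin t) := ⟨z⟩
  let P : PainterStrategy n t := fun h e =>
    Classical.epsilon fun c => ∃ X, PainterInv z colour (h ++ [(e, c)]) X
  refine ⟨P, fun B k hvalid => ?_⟩
  induction k with
  | zero => exact ⟨_, PainterInv.nil⟩
  | succ k ih =>
    obtain ⟨X, H⟩ := ih fun j hj => hvalid j (by lia)
    exact Classical.epsilon_spec (H.exists_append hz (hvalid k (by lia)).1)

theorem BuilderWinsIn.three_mul_sum_le {n t k : ℕ} [NeZero t] {r : Fin t → ℕ} (hr : ∀ c, 1 ≤ r c)
    (H : BuilderWinsIn n t r k) : 3 * (∑ c, (r c - 1) + 1) ≤ k + n := by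
  obtain ⟨B, hvalid, hwin⟩ := H
  let z : Fin t := 0
  let colour : (Σ c : {c // c ≠ z}, Fin (r c - 1)) → Fin t := fun i => i.1
  obtain ⟨P, hP⟩ := exists_painterStrategy (n := n) (colour := colour) fun i => i.1.2
  obtain ⟨X, HX⟩ := hP B k (hvalid P)
  obtain ⟨c, M, hcard, hM, hcol⟩ := hwin P
  have hrc := hr c
  rcases eq_or_ne c z with hc | hc
  · have hwon := HX.three_mul_card_le hM (fun e he => hc ▸ hcol e he) (by lia)
    simp only [Fintype.card_sigma, Fintype.card_fin, length_gamePlay] at hwon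
    rw [Fintype.sum_eq_add_sum_subtype_ne _ z]
    lia
  · have hslots : ({i | colour i = c} : Finset _) ⊆ univ.image (Sigma.mk ⟨c, hc⟩) := by
      rintro ⟨⟨c', hc'⟩, a⟩ hi
      obtain rfl : c' = c := by simpa [colour] using hi
      simp
    have hcard_slots : #{i | colour i = c} ≤ r c - 1 :=
      (Finset.card_le_card hslots).trans (Finset.card_image_le.trans_eq (Finset.card_fin _))
    have := HX.card_le_card_slots hc hM hcol
    lia

/-! ### Builder's strategy -/

/-- Builder can force the game from the history `h`, within `k` legal moves, to a history `h'` with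
`G k' h'`, where `k'` is the number of moves left over from the budget `k`. -/
inductive Forces {n t : ℕ} (G : ℕ → GameHistory n t → Prop) : ℕ → GameHistory n t → Prop
  | done {k : ℕ} {h : GameHistory n t} : G k h → Forces G k h
  | move {k : ℕ} {h : GameHistory n t} (e : Sym2 (Fin n)) :
      IsLegal h e → (∀ c, Forces G k (h ++ [(e, c)])) → Forces G (k + 1) h

namespace Forces

variable {n t k : ℕ} {G G' : ℕ → GameHistory n t → Prop} {h : GameHistory n t} {r : Fin t → ℕ}

theorem bind (H : Forces G k h) (hG : ∀ k h, G k h → Forces G' k h) : Forces G' k h := by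
  induction H with
  | done hg => exact hG _ _ hg
  | move e he _ ih => exact .move e he ih

theorem exists_isLegal_and_forces (H : Forces (fun _ => HistoryHasMatching n t r) (k + 1) h)
    (hlen : h.length < n.choose 2) :
    ∃ e, IsLegal h e ∧ ∀ c, Forces (fun _ => HistoryHasMatching n t r) k (h ++ [(e, c)]) := by
  cases H with
  | done hwon =>
    obtain ⟨e, he⟩ := exists_isLegal hlen
    exact ⟨e, he, fun c => .done (hwon.mono (List.subset_append_left _ _))⟩
  | move e he hforce => exact ⟨e, he, hforce⟩

theorem builderWinsIn [NeZero n] (H : Forces (fun _ => HistoryHasMatching n t r) k [])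
    (hk : k ≤ n.choose 2) : BuilderWinsIn n t r k := by
  have : Nonempty (Sym2 (Fin n)) := ⟨s(0, 0)⟩
  let IsGood (h : GameHistory n t) (e : Sym2 (Fin n)) : Prop :=
    IsLegal h e ∧ ∀ c, Forces (fun _ => HistoryHasMatching n t r) (k - (h.length + 1))
      (h ++ [(e, c)])
  let B : BuilderStrategy n t := fun h => Classical.epsilon (IsGood h)
  have good_of_forces (P : PainterStrategy n t) {j : ℕ} (hj : j < k)
      (hforce : Forces (fun _ => HistoryHasMatching n t r) (k - j) (gamePlay B P j)) :
      IsGood (gamePlay B P j) (B (gamePlay B P j)) := by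
    refine Classical.epsilon_spec (p := IsGood _) ?_
    have hlen := length_gamePlay B P j
    rw [show k - j = k - (j + 1) + 1 by lia] at hforce
    simpa only [IsGood, hlen] using hforce.exists_isLegal_and_forces (by lia)
  have forces_gamePlay (P : PainterStrategy n t) {j : ℕ} (hj : j ≤ k) :
      Forces (fun _ => HistoryHasMatching n t r) (k - j) (gamePlay B P j) := by
    induction j with
    | zero => exact H
    | succ j ih =>
      simpa only [length_gamePlay, gamePlay] using
        (good_of_forces P hj (ih (by lia))).2 (P (gamePlay B P j) (B (gamePlay B P j)))
  refine ⟨B, fun P j hj => (good_of_forces P hj (forces_gamePlay P hj.le)).1, fun P => ?_⟩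
  have hend := forces_gamePlay P le_rfl
  rw [Nat.sub_self] at hend
  cases hend with
  | done hwon => exact hwon

end Forces

section Banked

variable {n t q : ℕ} {h h' : GameHistory n t} {i : Fin t} {S S' : Finset (Fin n)}
  {A : Finset (Sym2 (Fin n))} {r : Fin t → ℕ}

/-- Outside the vertex set `S` there is a matching of `q` edges of colour `i`. -/
def Banked (h : GameHistory n t) (S : Finset (Fin n)) (i : Fin t) (q : ℕ) : Prop :=
  ∃ N : Finset (Sym2 (Fin n)), #N = q ∧ IsMatchingIn N ∧ ∀ e ∈ N, (e, i) ∈ h ∧ ∀ v ∈ e, v ∉ S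

theorem banked_zero : Banked h S i 0 :=
  ⟨∅, by simp [isMatchingIn_empty]⟩

theorem Banked.add_card (H : Banked h S i q) (hh : h ⊆ h') (hS : S' ⊆ S) (hA : IsMatchingIn A)
    (hcol : ∀ e ∈ A, (e, i) ∈ h') (hAS : ∀ e ∈ A, ∀ v ∈ e, v ∈ S ∧ v ∉ S') :
    Banked h' S' i (q + #A) := by
  obtain ⟨N, rfl, hN, hNS⟩ := H
  have hdisj : ∀ e ∈ N, ∀ f ∈ A, EdgeDisjoint e f :=
    fun e he f hf v hve hvf => (hNS e he).2 v hve (hAS f hf v hvf).1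
  refine ⟨N ∪ A, Finset.card_union_of_disjoint (disjoint_of_edgeDisjoint hdisj),
    hN.union hA hdisj, fun e he => ?_⟩
  rcases Finset.mem_union.1 he with he | he
  · exact ⟨hh (hNS e he).1, fun v hv hvS => (hNS e he).2 v hv (hS hvS)⟩
  · exact ⟨hcol e he, fun v hv => (hAS e he v hv).2⟩

theorem Banked.mono (H : Banked h S i q) (hh : h ⊆ h') : Banked h' S i q :=
  let ⟨N, hcard, hN, hNS⟩ := H
  ⟨N, hcard, hN, fun e he => ⟨hh (hNS e he).1, (hNS e he).2⟩⟩

theorem Banked.historyHasMatching (H : Banked h S i q) (hq : r i ≤ q) :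
    HistoryHasMatching n t r h := by
  obtain ⟨N, rfl, hN, hNS⟩ := H
  obtain ⟨M, hMN, hM⟩ := Finset.exists_subset_card_eq hq
  exact ⟨i, M, hM, hN.mono hMN, fun e he => (hNS e (hMN he)).1⟩

end Banked

section LiveEdges

variable {n t : ℕ} {h h' : GameHistory n t} {S : Finset (Fin n)} {e f : Sym2 (Fin n)} {x y : Fin n}

/-- The edges played so far with both ends in `S`, the set of vertices not yet set aside. -/
def liveEdges (h : GameHistory n t) (S : Finset (Fin n)) : Finset (Sym2 (Fin n)) :=
  {e | (∃ c, (e, c) ∈ h) ∧ ∀ v ∈ e, v ∈ S}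

theorem mem_liveEdges : e ∈ liveEdges h S ↔ (∃ c, (e, c) ∈ h) ∧ ∀ v ∈ e, v ∈ S := by
  simp [liveEdges]

theorem isLegal_of_notMem_liveEdges (he : ¬ e.IsDiag) (heS : ∀ v ∈ e, v ∈ S)
    (hlive : e ∉ liveEdges h S) : IsLegal h e :=
  ⟨he, fun hmem => hlive (mem_liveEdges.2 ⟨by simpa using hmem, heS⟩)⟩

theorem isLegal_of_mem_of_mem (H : IsMatchingIn (liveEdges h S)) (he : e ∈ liveEdges h S)
    (hf : f ∈ liveEdges h S) (hef : e ≠ f) (hx : x ∈ e) (hy : y ∈ f) : IsLegal h s(x, y) := by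
  have hyx : y ≠ x := fun hyx => H.2 he hf hef x hx (hyx ▸ hy)
  refine isLegal_of_notMem_liveEdges (S := S) (by simpa using hyx.symm) ?_ fun hlive => ?_
  · simpa using ⟨(mem_liveEdges.1 he).2 x hx, (mem_liveEdges.1 hf).2 y hy⟩
  · have hxy : s(x, y) = e := by
      by_contra hne
      exact H.2 hlive he hne x (Sym2.mem_mk_left x y) hx
    exact H.2 he hf hef y (hxy ▸ Sym2.mem_mk_right x y) hy

theorem liveEdges_append_singleton {c : Fin t} (heS : ∀ v ∈ e, v ∈ S) :
    liveEdges (h ++ [(e, c)]) S = liveEdges h S ∪ {e} := by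
  ext f
  simp only [mem_liveEdges, List.mem_append, List.mem_singleton, Prod.mk.injEq, Finset.mem_union,
    Finset.mem_singleton]
  grind

theorem liveEdges_sdiff_subset (hh : h ⊆ h') {Q : Finset (Fin n)}
    {D : Finset (Sym2 (Fin n))} (H : IsMatchingIn (liveEdges h S)) (hD : D ⊆ liveEdges h S)
    (hQ : ∀ v ∈ Q, ∃ e ∈ D, v ∈ e) : liveEdges h S \ D ⊆ liveEdges h' (S \ Q) := by
  intro e he
  obtain ⟨he, heD⟩ := Finset.mem_sdiff.1 he
  obtain ⟨⟨c, hc⟩, heS⟩ := mem_liveEdges.1 he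
  refine mem_liveEdges.2 ⟨⟨c, hh hc⟩, fun v hv => Finset.mem_sdiff.2 ⟨heS v hv, fun hvQ => ?_⟩⟩
  obtain ⟨f, hf, hvf⟩ := hQ v hvQ
  exact H.2 he (hD hf) (fun hef => heD (hef ▸ hf)) v hv hvf

theorem liveEdges_sdiff_subset_liveEdges {Q : Finset (Fin n)}
    (hnew : ∀ p ∈ h', p ∈ h ∨ ∃ v ∈ p.1, v ∈ Q) : liveEdges h' (S \ Q) ⊆ liveEdges h S := by
  intro e he
  obtain ⟨⟨c, hc⟩, heS⟩ := mem_liveEdges.1 he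
  rcases hnew _ hc with hc | ⟨v, hv, hvQ⟩
  · exact mem_liveEdges.2 ⟨⟨c, hc⟩, fun v hv => (Finset.mem_sdiff.1 (heS v hv)).1⟩
  · exact absurd hvQ (Finset.mem_sdiff.1 (heS v hv)).2

end LiveEdges

/-- Builder's invariant: `S` is the set of vertices not set aside, `q` edges of each colour are
banked, and Builder wants to bank `m` more with `k` moves left. The budgets reflect that `2m + 1`
live edges are needed to start a round, that each of the `m` rounds takes at most three moves, and
that the live edges still missing cost one move each. -/
structure BuilderInv {n : ℕ} (q m k : ℕ) (S : Finset (Fin n)) (h : GameHistory n 3) : Prop where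
  banked : ∀ i, Banked h S i q
  isMatching : IsMatchingIn (liveEdges h S)
  le_card : 2 * (2 * m + 1) ≤ #S
  rounds_budget : 3 * m ≤ k
  total_budget : (2 * m + 1) + 3 * m ≤ #(liveEdges h S) + k

/-- Live edges of all `t` colours; the `i`-th one has colour `i`. -/
structure IsRainbow {n t : ℕ} (h : GameHistory n t) (S : Finset (Fin n))
    (e : Fin t → Sym2 (Fin n)) : Prop where
  injective : Function.Injective e
  mem_liveEdges : ∀ i, e i ∈ liveEdges h S
  mem_history : ∀ i, (e i, i) ∈ h

namespace BuilderInv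

variable {n q m k : ℕ} {S : Finset (Fin n)} {h : GameHistory n 3}

theorem exists_isLegal_and_builderInv (H : BuilderInv q m (k + 1) S h)
    (hlt : #(liveEdges h S) < 2 * m + 1) :
    ∃ e, IsLegal h e ∧ ∀ c, BuilderInv q m k S (h ++ [(e, c)]) := by
  have htwo : 1 < #(S \ (liveEdges h S).biUnion Sym2.toFinset) := by
    have := Finset.le_card_sdiff ((liveEdges h S).biUnion Sym2.toFinset) S
    rw [H.isMatching.card_biUnion_toFinset] at this
    have := H.le_card
    lia
  obtain ⟨x, hx, y, hy, hxy⟩ := Finset.one_lt_card.1 htwo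
  simp only [Finset.mem_sdiff, Finset.mem_biUnion, Sym2.mem_toFinset, not_exists, not_and]
    at hx hy
  have hdiag : ¬ s(x, y).IsDiag := by simpa using hxy
  have hxyS : ∀ v ∈ s(x, y), v ∈ S := by simpa using ⟨hx.1, hy.1⟩
  have hdisj : ∀ e ∈ liveEdges h S, ∀ f ∈ ({s(x, y)} : Finset _), EdgeDisjoint e f := by
    simp only [Finset.mem_singleton, forall_eq, EdgeDisjoint, Sym2.mem_iff]
    rintro e he v hv (rfl | rfl)
    exacts [hx.2 e he hv, hy.2 e he hv]
  have hfresh := disjoint_of_edgeDisjoint hdisj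
  refine ⟨s(x, y), isLegal_of_notMem_liveEdges hdiag hxyS
    (Finset.disjoint_singleton_right.1 hfresh), fun c => ?_⟩
  have hlive : liveEdges (h ++ [(s(x, y), c)]) S = _ := liveEdges_append_singleton hxyS
  have := H.total_budget
  exact
    { banked := fun i => (H.banked i).mono (List.subset_append_left _ _)
      isMatching := hlive ▸ H.isMatching.union (isMatchingIn_singleton hdiag) hdisj
      le_card := H.le_card
      rounds_budget := by lia
      total_budget := by
        rw [hlive, Finset.card_union_of_disjoint hfresh, Finset.card_singleton]
        lia }

theorem forces_le_card_liveEdges (H : BuilderInv q m k S h) :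
    Forces (fun k h => BuilderInv q m k S h ∧ 2 * m + 1 ≤ #(liveEdges h S)) k h := by
  induction k generalizing h with
  | zero =>
    have := H.total_budget
    exact .done ⟨H, by lia⟩
  | succ k ih =>
    rcases le_or_gt (2 * m + 1) #(liveEdges h S) with hle | hlt
    · exact .done ⟨H, hle⟩
    · obtain ⟨e, he, hnext⟩ := H.exists_isLegal_and_builderInv hlt
      exact .move e he fun c => ih (hnext c)

theorem historyHasMatching {r : Fin 3 → ℕ} (H : BuilderInv q m k S h) {i : Fin 3}
    {A : Finset (Sym2 (Fin n))} (hA : A ⊆ liveEdges h S) (hcol : ∀ e ∈ A, (e, i) ∈ h)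
    (hr : r i ≤ q + #A) : HistoryHasMatching n 3 r h :=
  ((H.banked i).add_card (List.Subset.refl h) (Finset.empty_subset S) (H.isMatching.mono hA) hcol
    fun _ he v hv => ⟨(mem_liveEdges.1 (hA he)).2 v hv, Finset.notMem_empty v⟩
    ).historyHasMatching hr

theorem historyHasMatching_or_exists_isRainbow (H : BuilderInv q m k S h)
    (hle : 2 * m + 1 ≤ #(liveEdges h S)) :
    HistoryHasMatching n 3 (fun _ => q + m + 1) h ∨ ∃ e, IsRainbow h S e := by
  have hplayed : ∀ e ∈ liveEdges h S, ∃ c, (e, c) ∈ h := fun e he => (mem_liveEdges.1 he).1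
  choose! col hcol using hplayed
  rcases exists_lt_card_fiber_or_forall_exists_mem (s := liveEdges h S) (m := m) col
    (by simpa using hle) with ⟨i, hi⟩ | hall
  · refine .inl (H.historyHasMatching (i := i) (A := {e ∈ liveEdges h S | col e = i})
      (Finset.filter_subset _ _) (fun e he => ?_) (by lia))
    obtain ⟨he, hei⟩ := Finset.mem_filter.1 he
    exact hei ▸ hcol e he
  · choose e he hei using hall
    exact .inr ⟨e, Function.LeftInverse.injective hei, he, fun i => by
      simpa only [hei i] using hcol _ (he i)⟩

theorem sdiff {e : Fin 3 → Sym2 (Fin n)} {h' : GameHistory n 3} {f g : Sym2 (Fin n)} {y : Fin n}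
    {k' : ℕ} (H : BuilderInv q (m + 1) k S h) (E : IsRainbow h S e) (hk : k ≤ k' + 2) (hh : h ⊆ h')
    (hfg : ∀ v, v ∈ f ∨ v ∈ g → ∃ i, v ∈ e i)
    (hy : y ∈ f ∨ y ∈ g) (hnew : ∀ p ∈ h', p ∈ h ∨ y ∈ p.1)
    (hcol : ∀ i, ∃ d : Sym2 (Fin n), ¬ d.IsDiag ∧ (d, i) ∈ h' ∧ ∀ v ∈ d, v ∈ f ∨ v ∈ g) :
    BuilderInv (q + 1) m k' (S \ (f.toFinset ∪ g.toFinset)) h' := by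
  set Q := f.toFinset ∪ g.toFinset
  have mem_Q (v) : v ∈ Q ↔ v ∈ f ∨ v ∈ g := by simp [Q]
  simp only [← mem_Q] at hfg hy hcol
  have hQ : #Q ≤ 4 := by
    have card_le (d : Sym2 (Fin n)) : #d.toFinset ≤ 2 := by
      rw [Sym2.card_toFinset]; split_ifs <;> simp
    exact (Finset.card_union_le _ _).trans (add_le_add (card_le f) (card_le g))
  have hlive : #(liveEdges h S) - 3 ≤ #(liveEdges h' (S \ Q)) := by
    have hsub : liveEdges h S \ univ.image e ⊆ liveEdges h' (S \ Q) :=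
      liveEdges_sdiff_subset hh H.isMatching
        (by simpa [Finset.image_subset_iff] using E.mem_liveEdges) (by simpa using hfg)
    have hcard : #(univ.image e) ≤ 3 := Finset.card_image_le
    have := Finset.le_card_sdiff (univ.image e) (liveEdges h S)
    have := Finset.card_le_card hsub
    lia
  have hrounds := H.rounds_budget
  have htotal := H.total_budget
  have hsub : liveEdges h' (S \ Q) ⊆ liveEdges h S :=
    liveEdges_sdiff_subset_liveEdges fun p hp => (hnew p hp).imp_right fun hyp => ⟨y, hyp, hy⟩
  refine ⟨fun i => ?_, H.isMatching.mono hsub, ?_, by lia, by lia⟩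
  · obtain ⟨d, hd, hdi, hdQ⟩ := hcol i
    refine (H.banked i).add_card (A := {d}) hh Finset.sdiff_subset (isMatchingIn_singleton hd)
      (by simpa using hdi) ?_
    simp only [Finset.mem_singleton, forall_eq, Finset.mem_sdiff, not_and, not_not]
    intro v hv
    obtain ⟨j, hj⟩ := hfg v (hdQ v hv)
    exact ⟨(mem_liveEdges.1 (E.mem_liveEdges j)).2 v hj, fun _ => hdQ v hv⟩
  · have := Finset.le_card_sdiff Q S
    have := H.le_card
    lia

theorem isLegal_of_isRainbow {e : Fin 3 → Sym2 (Fin n)} {i j : Fin 3} {x y : Fin n}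
    (H : BuilderInv q m k S h) (E : IsRainbow h S e) (hij : i ≠ j) (hx : x ∈ e i) (hy : y ∈ e j) :
    IsLegal h s(x, y) :=
  isLegal_of_mem_of_mem H.isMatching (E.mem_liveEdges i) (E.mem_liveEdges j)
    (E.injective.ne hij) hx hy

theorem forces_of_repeated_colour {e : Fin 3 → Sym2 (Fin n)} {i j : Fin 3} {x y : Fin n}
    (H : BuilderInv q (m + 1) (k + 2) S h) (E : IsRainbow h S e) (hij : i ≠ j) (hx : x ∈ e i)
    (hy : y ∈ e j) :
    Forces (fun k h => ∃ S, BuilderInv (q + 1) m k S h) (k + 1) (h ++ [(s(x, y), i)]) := by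
  have third_colour : ∀ i j : Fin 3, ∃ l, i ≠ l ∧ j ≠ l := by decide
  obtain ⟨l, hil, hjl⟩ := third_colour i j
  have hcover (c : Fin 3) : c = i ∨ c = j ∨ c = l := by lia
  obtain ⟨z, hz⟩ : ∃ z, z ∈ e l := ⟨_, (e l).out_fst_mem⟩
  have hxy := H.isLegal_of_isRainbow E hij hx hy
  have hyz := H.isLegal_of_isRainbow E hjl hy hz
  have hxz := H.isLegal_of_isRainbow E hil hx hz
  have hdiag (c) : ¬ (e c).IsDiag := H.isMatching.1 _ (E.mem_liveEdges c)
  have hne : s(y, z) ≠ s(x, y) := by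
    have := hxz.1
    have := hyz.1
    grind [Sym2.mk_isDiag_iff, Sym2.eq_iff]
  have hnew {b} : ∀ p ∈ h ++ [(s(x, y), i)] ++ [(s(y, z), b)], p ∈ h ∨ y ∈ p.1 := by
    grind [Sym2.mem_mk_left, Sym2.mem_mk_right]
  refine .move s(y, z) ⟨hyz.1, by simpa [hne] using hyz.2⟩ fun b => .done ?_
  rcases hcover b with rfl | rfl | rfl
  · refine ⟨_, H.sdiff (f := e j) (g := e l) E le_rfl (by simp) (by grind) (by grind)
      hnew fun c => ?_⟩
    rcases hcover c with rfl | rfl | rfl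
    · exact ⟨s(y, z), hyz.1, by simp, by grind⟩
    · exact ⟨e c, hdiag c, by simp [E.mem_history c], by grind⟩
    · exact ⟨e c, hdiag c, by simp [E.mem_history c], by grind⟩
  · refine ⟨_, H.sdiff (f := e l) (g := s(x, y)) E le_rfl (by simp) (by grind) (by grind)
      hnew fun c => ?_⟩
    rcases hcover c with rfl | rfl | rfl
    · exact ⟨s(x, y), hxy.1, by simp, by grind⟩
    · exact ⟨s(y, z), hyz.1, by simp, by grind⟩
    · exact ⟨e c, hdiag c, by simp [E.mem_history c], by grind⟩
  · refine ⟨_, H.sdiff (f := e j) (g := s(x, z)) E le_rfl (by simp) (by grind) (by grind)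
      hnew fun c => ?_⟩
    rcases hcover c with rfl | rfl | rfl
    · exact ⟨s(x, y), hxy.1, by simp, by grind⟩
    · exact ⟨e c, hdiag c, by simp [E.mem_history c], by grind⟩
    · exact ⟨s(y, z), hyz.1, by simp, by grind⟩

theorem forces_succ {e : Fin 3 → Sym2 (Fin n)} (H : BuilderInv q (m + 1) k S h)
    (E : IsRainbow h S e) : Forces (fun k h => ∃ S, BuilderInv (q + 1) m k S h) k h := by
  obtain ⟨k, rfl⟩ : ∃ k', k = k' + 2 := ⟨k - 2, by have := H.rounds_budget; lia⟩
  obtain ⟨x, hx⟩ : ∃ x, x ∈ e 0 := ⟨_, (e 0).out_fst_mem⟩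
  obtain ⟨y, hy⟩ : ∃ y, y ∈ e 1 := ⟨_, (e 1).out_fst_mem⟩
  have hxy : IsLegal h s(x, y) := H.isLegal_of_isRainbow E (by decide) hx hy
  have hdiag (c) : ¬ (e c).IsDiag := H.isMatching.1 _ (E.mem_liveEdges c)
  refine .move s(x, y) hxy fun c => ?_
  obtain rfl | rfl | rfl : c = 0 ∨ c = 1 ∨ c = 2 := by lia
  · exact H.forces_of_repeated_colour E (by decide) hx hy
  · rw [Sym2.eq_swap]
    exact H.forces_of_repeated_colour E (by decide) hy hx
  · refine .done ⟨_, H.sdiff (f := e 0) (g := e 1) E (by lia) (by simp) (by grind) (.inr hy)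
      (by grind [Sym2.mem_mk_right]) fun b => ?_⟩
    obtain rfl | rfl | rfl : b = 0 ∨ b = 1 ∨ b = 2 := by lia
    · exact ⟨e 0, hdiag 0, by simp [E.mem_history 0], by grind⟩
    · exact ⟨e 1, hdiag 1, by simp [E.mem_history 1], by grind⟩
    · exact ⟨s(x, y), hxy.1, by simp, by grind⟩

theorem forces_historyHasMatching (H : BuilderInv q m k S h) :
    Forces (fun _ => HistoryHasMatching n 3 fun _ => q + m + 1) k h := by
  induction m generalizing q k S h with
  | zero =>
    refine H.forces_le_card_liveEdges.bind fun k h ⟨H, hle⟩ => .done ?_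
    rcases H.historyHasMatching_or_exists_isRainbow hle with hwon | ⟨e, E⟩
    · exact hwon
    · exact H.historyHasMatching (A := {e 0}) (by simpa using E.mem_liveEdges 0)
        (by simpa using E.mem_history 0) (by simp)
  | succ m ih =>
    refine H.forces_le_card_liveEdges.bind fun k h ⟨H, hle⟩ => ?_
    rcases H.historyHasMatching_or_exists_isRainbow hle with hwon | ⟨e, E⟩
    · exact .done hwon
    · refine (H.forces_succ E).bind fun k h ⟨S, H⟩ => ?_
      rw [← add_assoc, add_right_comm q]
      exact ih H

theorem nil (hn : 2 * (2 * m + 1) ≤ n) : BuilderInv (n := n) 0 m (5 * m + 1) univ [] where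
  banked _ := banked_zero
  isMatching := by simpa [liveEdges] using isMatchingIn_empty
  le_card := by simpa using hn
  rounds_budget := by lia
  total_budget := by lia

end BuilderInv

theorem builderWinsIn_three {r n : ℕ} (hr : 1 ≤ r) (hn : 4 * r - 2 ≤ n) :
    BuilderWinsIn n 3 (fun _ => r) (5 * r - 4) := by
  obtain ⟨m, rfl⟩ : ∃ m, r = m + 1 := ⟨r - 1, by lia⟩
  have : NeZero n := ⟨by lia⟩
  have hmoves : 5 * (m + 1) - 4 ≤ n.choose 2 := by
    rw [Nat.choose_two_right, Nat.le_div_iff_mul_le two_pos]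
    calc (5 * (m + 1) - 4) * 2 = (5 * m + 1) * 2 := by lia
      _ ≤ (4 * m + 2) * (4 * m + 1) := by nlinarith
      _ ≤ n * (n - 1) := Nat.mul_le_mul (by lia) (by lia)
  have hforces := (BuilderInv.nil (m := m) (n := n) (by lia)).forces_historyHasMatching
  rw [zero_add] at hforces
  exact hforces.builderWinsIn hmoves

/-- For `r ≥ 1` and `n₃ = 4r − 2 = R₃(rK₂)`, we have `R̃₃(rK₂; n₃) = 5r − 4`. -/
theorem restrictedOnlineRamsey_three_colours (r : ℕ) (hr : 1 ≤ r) :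
    restrictedOnlineRamsey (4 * r - 2) 3 (fun _ => r) = 5 * r - 4 := by
  have hbuilder : BuilderWinsIn (4 * r - 2) 3 (fun _ => r) (5 * r - 4) :=
    builderWinsIn_three hr le_rfl
  refine le_antisymm (Nat.sInf_le hbuilder) (le_csInf ⟨_, hbuilder⟩ fun k hk => ?_)
  have hpainter : 3 * (∑ _ : Fin 3, (r - 1) + 1) ≤ k + (4 * r - 2) :=
    BuilderWinsIn.three_mul_sum_le (fun _ => hr) hk
  simp only [Finset.sum_const, Finset.card_univ, Fintype.card_fin, smul_eq_mul] at hpainter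
  lia
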